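/- (Weak duality.) Let y_0 be a nondominated point of (P(0)). For every closed convex process Δ : Z ⇉ Y with Δ(z) ≠ ∅ for all z, define Ψ(Δ) := ∪_{x∈Ω}(F(x)+Δ(G(x)+Z_+)) and Φ(Δ) := {y ∈ cl(Ψ(Δ)) : Ψ(Δ) ∩ (y−Y_+) ⊆ y+Y_+}. Then there is no Δ ∈ P(Z,Y) and no y_1 ∈ Φ(Δ) such that y_1 − y_0 ∈ int(Y_+). -/

import Mathlib

/-!
Since `(0, 0)` lies in the graph of `Δ`, the primal values `V(0)` are contained in `Ψ(Δ)`, so `y₀`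
is a limit of points of `Ψ(Δ)`. If `y₁ - y₀` were interior to `Y₊`, some `v ∈ Ψ(Δ)` would satisfy
`y₁ - v ∈ int Y₊`, and nondominatedness of `y₁` would give `v - y₁ ∈ Y₊`. But a convex cone that
contains the negative of one of its interior points is a neighbourhood of `0`, hence is the whole
space.
-/

open Pointwise Filter Topology

namespace Paper

section Defs

variable {E : Type*} [NormedAddCommGroup E] [NormedSpace ℝ E]

/-- The cone hull of a set: all nonnegative multiples of its elements. -/
def coneHull (A : Set E) : Set E := {x | ∃ r : ℝ, 0 ≤ r ∧ ∃ a ∈ A, x = r • a}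

/-- A cone: a nonempty set closed under multiplication by nonnegative scalars. -/
def IsCone (K : Set E) : Prop := K.Nonempty ∧ ∀ r : ℝ, 0 ≤ r → ∀ x ∈ K, r • x ∈ K

/-- A pointed cone: `K ∩ (-K) = {0}`. -/
def IsPointed (K : Set E) : Prop := K ∩ (-K) = {0}

/-- A proper cone: `{0} ≠ K ≠ E`. -/
def IsProper (K : Set E) : Prop := K ≠ {0} ∧ K ≠ Set.univ

/-- A solid cone: nonempty interior. -/
def IsSolid (K : Set E) : Prop := (interior K).Nonempty

/-- The contingent cone to `A` at `w`. -/
def contingentCone (A : Set E) (w : E) : Set E :=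
  {v | Filter.liminf (fun h : ℝ => Metric.infDist (w + h • v) A / h) (𝓝[>] (0:ℝ)) = 0}

end Defs

section SV

variable {X Y Z : Type*}
  [NormedAddCommGroup X] [NormedSpace ℝ X]
  [NormedAddCommGroup Y] [NormedSpace ℝ Y]
  [NormedAddCommGroup Z] [NormedSpace ℝ Z]

/-- The graph of a set-valued map. -/
def graph (Δ : Z → Set Y) : Set (Z × Y) := {p | p.2 ∈ Δ p.1}

/-- The image of a set by a set-valued map. -/
def imageSet (Δ : Z → Set Y) (A : Set Z) : Set Y := ⋃ w ∈ A, Δ w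

/-- The feasible set map `S(z) = {x ∈ Ω : G(x) ∩ (z - Z₊) ≠ ∅}`. -/
def Smap (Ω : Set X) (G : X → Set Z) (Zp : Set Z) (z : Z) : Set X :=
  {x | x ∈ Ω ∧ (G x ∩ ({z} - Zp)).Nonempty}

/-- The value map `V(z) = F(S(z))`. -/
def Vmap (Ω : Set X) (F : X → Set Y) (G : X → Set Z) (Zp : Set Z) (z : Z) : Set Y :=
  ⋃ x ∈ Smap Ω G Zp z, F x

/-- The map `(V + Y₊)(z) = V(z) + Y₊`. -/
def VplusMap (Ω : Set X) (F : X → Set Y) (G : X → Set Z) (Zp : Set Z) (Yp : Set Y)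
    (z : Z) : Set Y :=
  Vmap Ω F G Zp z + Yp

/-- The graph of `V + Y₊`. -/
def GraphVplus (Ω : Set X) (F : X → Set Y) (G : X → Set Z) (Zp : Set Z) (Yp : Set Y) :
    Set (Z × Y) :=
  {p : Z × Y | p.2 ∈ Vmap Ω F G Zp p.1 + Yp}

/-- Minimal points of a set `A` with respect to the cone `Yp`. -/
def MinSet (Yp : Set Y) (A : Set Y) : Set Y :=
  {a ∈ A | A ∩ ({a} - Yp) ⊆ {a} + Yp}

/-- The marginal map `M(z) = Min(V(z))`. -/
def Mmap (Ω : Set X) (F : X → Set Y) (G : X → Set Z) (Zp : Set Z) (Yp : Set Y)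
    (z : Z) : Set Y :=
  MinSet Yp (Vmap Ω F G Zp z)

/-- `y₀` is a nondominated point of `(P(0))`. -/
def Nondominated (Ω : Set X) (F : X → Set Y) (G : X → Set Z) (Zp : Set Z) (Yp : Set Y)
    (y0 : Y) : Prop :=
  y0 ∈ closure (Vmap Ω F G Zp 0) ∧
    Vmap Ω F G Zp 0 ∩ ({y0} - Yp) ⊆ {y0} + Yp

/-- `y₀` is a minimal point of `(P(0))`. -/
def MinimalPoint (Ω : Set X) (F : X → Set Y) (G : X → Set Z) (Zp : Set Z) (Yp : Set Y)
    (y0 : Y) : Prop :=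
  y0 ∈ Vmap Ω F G Zp 0 ∧
    Vmap Ω F G Zp 0 ∩ ({y0} - Yp) ⊆ {y0} + Yp

/-- The set `S_{Y₊}(y₀)` of separating pairs of continuous linear functionals. -/
def Sdual (Ω : Set X) (F : X → Set Y) (G : X → Set Z) (Zp : Set Z) (Yp : Set Y) (y0 : Y) :
    Set ((Z →L[ℝ] ℝ) × (Y →L[ℝ] ℝ)) :=
  {p | (∀ z' ∈ -Zp, ∀ y' ∈ ({y0} : Set Y) - Yp, p.1 z' + p.2 y' ≤ p.2 y0) ∧
       (∀ q ∈ GraphVplus Ω F G Zp Yp, p.2 y0 ≤ p.1 q.1 + p.2 q.2)}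

/-- `P(Z,Y)`: closed convex processes with full domain. -/
def PZY : Set (Z → Set Y) :=
  {Δ | IsClosed (graph Δ) ∧ Convex ℝ (graph Δ) ∧ IsCone (graph Δ) ∧ ∀ z, (Δ z).Nonempty}

/-- The set `Λ_{(z*,y*)}` of processes associated to `(z*,y*)`. -/
def Lambda (zs : Z →L[ℝ] ℝ) (ys : Y →L[ℝ] ℝ) : Set (Z → Set Y) :=
  {Δ | Δ ∈ PZY ∧ graph Δ \ {0} ⊆ {p : Z × Y | 0 < -(zs p.1) + ys p.2}}

/-- The set `Γ_{y₀}` of processes associated to `y₀`. -/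
def Gamma (Ω : Set X) (F : X → Set Y) (G : X → Set Z) (Zp : Set Z) (Yp : Set Y) (y0 : Y) :
    Set (Z → Set Y) :=
  ⋃ p ∈ Sdual Ω F G Zp Yp y0 \ {0}, Lambda p.1 p.2

/-- The Slater constraint qualification. -/
def Slater (Ω : Set X) (F : X → Set Y) (G : X → Set Z) (Zp : Set Z) : Prop :=
  ∃ x1 ∈ Ω, (F x1).Nonempty ∧ (G x1 ∩ (-interior Zp)).Nonempty

/-- `Ψ(Δ) = ∪_{x∈Ω}(F(x) + Δ(G(x)+Z₊))`. -/
def Umap (Ω : Set X) (F : X → Set Y) (G : X → Set Z) (Zp : Set Z) (Δ : Z → Set Y) : Set Y :=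
  ⋃ x ∈ Ω, (F x + imageSet Δ (G x + Zp))

/-- The dual map `Φ(Δ)`: nondominated points of the closure of `Ψ(Δ)`. -/
def Phi (Ω : Set X) (F : X → Set Y) (G : X → Set Z) (Zp : Set Z) (Yp : Set Y)
    (Δ : Z → Set Y) : Set Y :=
  {y ∈ closure (Umap Ω F G Zp Δ) | Umap Ω F G Zp Δ ∩ ({y} - Yp) ⊆ {y} + Yp}

/-- `Δ` is a Lagrange multiplier of `(P(0))` at `y₀`. -/
def LagrangeMultiplier (Ω : Set X) (F : X → Set Y) (G : X → Set Z) (Zp : Set Z) (Yp : Set Y)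
    (Δ : Z → Set Y) (y0 : Y) : Prop :=
  y0 ∈ closure (Umap Ω F G Zp Δ) ∧ Umap Ω F G Zp Δ ∩ ({y0} - Yp) ⊆ {y0} + Yp

/-- The graph of the Lagrange process of `(P(0))` at `y₀`. -/
def GraphLagrange (Ω : Set X) (F : X → Set Y) (G : X → Set Z) (Zp : Set Z) (Yp : Set Y)
    (y0 : Y) : Set (Z × Y) :=
  {p : Z × Y | ∀ q ∈ Sdual Ω F G Zp Yp y0, q.1 p.1 ≤ q.2 p.2}

/-- The Lagrange process of `(P(0))` at `y₀`, as a set-valued map. -/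
def Lagrange (Ω : Set X) (F : X → Set Y) (G : X → Set Z) (Zp : Set Z) (Yp : Set Y) (y0 : Y)
    (z : Z) : Set Y :=
  {y | (z, y) ∈ GraphLagrange Ω F G Zp Yp y0}

/-- The contingent derivative of a set-valued map `H` at `(z₀, y₀)`. -/
def contingentDeriv (H : Z → Set Y) (z0 : Z) (y0 : Y) (z : Z) : Set Y :=
  {y | (z, y) ∈ contingentCone (graph H) (z0, y0)}

/-- The S-derivative (Shi derivative) of a set-valued map `H` at `(z₀, y₀)`. -/
def Sderiv (H : Z → Set Y) (z0 : Z) (y0 : Y) (z : Z) : Set Y :=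
  {y | ∃ (h : ℕ → ℝ) (zn : ℕ → Z) (yn : ℕ → Y),
    (∀ n, 0 < h n) ∧ Filter.Tendsto zn Filter.atTop (𝓝 z) ∧
    Filter.Tendsto yn Filter.atTop (𝓝 y) ∧
    Filter.Tendsto (fun n => h n • zn n) Filter.atTop (𝓝 (0:Z)) ∧
    ∀ n, y0 + h n • yn n ∈ H (z0 + h n • zn n)}

/-- The standing assumptions of the paper: `Y₊`, `Z₊` proper solid convex cones, `Ω` nonempty
convex, `F` is `Y₊`-convex and `G` is `Z₊`-convex. -/
def StandingHyp (Ω : Set X) (F : X → Set Y) (G : X → Set Z) (Zp : Set Z) (Yp : Set Y) : Prop :=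
  IsCone Yp ∧ IsProper Yp ∧ IsSolid Yp ∧ Convex ℝ Yp ∧
  IsCone Zp ∧ IsProper Zp ∧ IsSolid Zp ∧ Convex ℝ Zp ∧
  Ω.Nonempty ∧ Convex ℝ Ω ∧
  Convex ℝ {p : X × Y | p.1 ∈ Ω ∧ p.2 ∈ F p.1 + Yp} ∧
  Convex ℝ {p : X × Z | p.1 ∈ Ω ∧ p.2 ∈ G p.1 + Zp}

end SV

variable {X Y Z : Type*}
  [NormedAddCommGroup X] [NormedSpace ℝ X]
  [NormedAddCommGroup Y] [NormedSpace ℝ Y]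
  [NormedAddCommGroup Z] [NormedSpace ℝ Z]

section ConvexCone

variable {E : Type*} [AddCommGroup E] [Module ℝ E] [TopologicalSpace E] {C : ConvexCone ℝ E}

theorem convexCone_eq_top_of_mem_nhds_zero [ContinuousSMul ℝ E] (hC : (C : Set E) ∈ 𝓝 0) :
    C = ⊤ := by
  refine eq_top_iff.2 fun x _ => ?_
  have habs : Absorbs ℝ (C : Set E) {x} := absorbent_nhds_zero hC x
  obtain ⟨r, hr, hsub⟩ := habs.exists_pos
  have hx : x ∈ r • (C : Set E) :=
    Set.singleton_subset_iff.1 (hsub r (Real.norm_of_nonneg hr.le).ge)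
  obtain ⟨y, hy, rfl⟩ := hx
  exact C.smul_mem hr hy

variable [IsTopologicalAddGroup E] [ContinuousSMul ℝ E]

theorem neg_notMem_of_mem_interior (hC : C ≠ ⊤) {x : E} (hx : x ∈ interior (C : Set E)) :
    -x ∉ C := by
  intro hneg
  have hzero : (0 : E) ∈ interior (C + C : Set E) :=
    subset_interior_add_left ⟨x, hx, -x, hneg, add_neg_cancel x⟩
  have hadd : (C + C : Set E) ⊆ C := Set.add_subset_iff.2 C.add_mem
  exact hC (convexCone_eq_top_of_mem_nhds_zero
    (mem_interior_iff_mem_nhds.1 (interior_mono hadd hzero)))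

theorem sub_notMem_interior_of_mem_closure (hC : C ≠ ⊤) {A : Set E} {a b : E}
    (ha : a ∈ closure A) (hb : A ∩ ({b} - (C : Set E)) ⊆ {b} + (C : Set E)) :
    b - a ∉ interior (C : Set E) := by
  intro hint
  have hopen : IsOpen ((b - ·) ⁻¹' interior (C : Set E)) :=
    isOpen_interior.preimage (continuous_const.sub continuous_id)
  obtain ⟨v, hv : b - v ∈ interior (C : Set E), hvA⟩ := mem_closure_iff.1 ha _ hopen hint
  have hvb : v ∈ {b} - (C : Set E) := ⟨b, rfl, b - v, interior_subset hv, sub_sub_cancel b v⟩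
  obtain ⟨_, rfl, c, hc, rfl⟩ := hb ⟨hvA, hvb⟩
  exact neg_notMem_of_mem_interior hC hv (by simpa using hc)

end ConvexCone

section IsCone

variable {E : Type*} [NormedAddCommGroup E] [NormedSpace ℝ E] {K : Set E}

theorem IsCone.zero_mem (hK : IsCone K) : (0 : E) ∈ K := by
  obtain ⟨x, hx⟩ := hK.1
  simpa using hK.2 0 le_rfl x hx

theorem IsCone.coe_hull (hK : IsCone K) (hconv : Convex ℝ K) :
    (ConvexCone.hull ℝ K : Set E) = K := by
  refine Set.Subset.antisymm (fun x hx => ?_) ConvexCone.subset_hull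
  obtain ⟨c, hc, y, hy, rfl⟩ := (ConvexCone.mem_hull_of_convex hconv).1 hx
  exact hK.2 c hc.le y hy

end IsCone

section WeakDuality

variable {X Y Z : Type*} [NormedAddCommGroup Y] [NormedAddCommGroup Z]

theorem Vmap_add_subset_Umap (Ω : Set X) (F : X → Set Y) (G : X → Set Z) (Zp : Set Z)
    (Δ : Z → Set Y) (z : Z) : Vmap Ω F G Zp z + Δ z ⊆ Umap Ω F G Zp Δ := by
  rintro _ ⟨v, hv, d, hd, rfl⟩
  obtain ⟨x, ⟨hxΩ, g, hg, hgz⟩, hvx⟩ := Set.mem_iUnion₂.1 hv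
  obtain ⟨z, rfl, p, hp, rfl⟩ := hgz
  have hz : z ∈ G x + Zp := ⟨z - p, hg, p, hp, sub_add_cancel z p⟩
  exact Set.mem_biUnion hxΩ ⟨v, hvx, d, Set.mem_biUnion hz hd, rfl⟩

variable [NormedSpace ℝ Y]

theorem stmt_11_general {Ω : Set X} {F : X → Set Y} {G : X → Set Z} {Zp : Set Z} {Yp : Set Y}
    (hcone : IsCone Yp) (hconv : Convex ℝ Yp) (hne : Yp ≠ Set.univ) {Δ : Z → Set Y}
    (hΔ : (0 : Y) ∈ Δ 0) {y0 y1 : Y} (hy0 : y0 ∈ closure (Vmap Ω F G Zp 0))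
    (hy1 : y1 ∈ Phi Ω F G Zp Yp Δ) : y1 - y0 ∉ interior Yp := by
  have hcoe : (ConvexCone.hull ℝ Yp : Set Y) = Yp := hcone.coe_hull hconv
  have htop : ConvexCone.hull ℝ Yp ≠ ⊤ := fun h => hne (by rw [← hcoe, h, ConvexCone.coe_top])
  have hsub : Vmap Ω F G Zp 0 ⊆ Umap Ω F G Zp Δ :=
    (Set.subset_add_left _ hΔ).trans (Vmap_add_subset_Umap Ω F G Zp Δ 0)
  have hnondom := hy1.2
  rw [← hcoe] at hnondom ⊢
  exact sub_notMem_interior_of_mem_closure htop (closure_mono hsub hy0) hnondom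

end WeakDuality

theorem stmt_11 (Ω : Set X) (F : X → Set Y) (G : X → Set Z) (Zp : Set Z) (Yp : Set Y)
    (hSt : StandingHyp Ω F G Zp Yp)
    (y0 : Y) (hy0 : Nondominated Ω F G Zp Yp y0) :
    ¬ ∃ Δ ∈ (PZY : Set (Z → Set Y)), ∃ y1 ∈ Phi Ω F G Zp Yp Δ,
        y1 - y0 ∈ interior Yp := by
  rintro ⟨Δ, ⟨-, -, hΔ, -⟩, y1, hy1, hint⟩
  obtain ⟨hcone, ⟨-, hne⟩, -, hconv, -⟩ := hSt
  exact stmt_11_general hcone hconv hne hΔ.zero_mem hy0.1 hy1 hint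

end Paper
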